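/- Let r ≥ 1 be an integer, G a graph with nonnegative weight function w : V(G) → ℚ, L an r-list assignment of G, and 𝒮 a nonempty family of subsets of V(G) such that every maximal independent set of G is contained in some member of 𝒮. Then the maximum of ∑_{v∈F} w(v) over all F ⊆ V(G) such that G[F] admits a proper coloring respecting L equals the maximum, over r-tuples (S_1,…,S_r) ∈ 𝒮^r, of the maximum of ∑_{v∈F} w(v) over all F ⊆ S_1 ∪ … ∪ S_r for which G[F] admits a proper coloring φ respecting L with φ^{-1}(i) ⊆ S_i for every i ∈ {1,…,r}. -/

import Mathlib

open SimpleGraph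

/-- `φ` is a proper colouring of `G[F]` respecting the `r`-list assignment `L`:
adjacent vertices of `F` get different colours, and each vertex `v ∈ F` gets a colour
from its list `L v`. -/
def RespectsL {V : Type*} (G : SimpleGraph V) (r : ℕ) (L : V → Set (Fin r))
    (F : Finset V) (φ : {x : V // x ∈ F} → Fin r) : Prop :=
  (∀ a b : {x : V // x ∈ F}, G.Adj ↑a ↑b → φ a ≠ φ b) ∧ (∀ v : {x : V // x ∈ F}, φ v ∈ L ↑v)

/-!
In a proper colouring every colour class is an independent set. By Zorn's lemma it extends to a
maximal independent set, hence lies in a member of `𝒮`; choosing one such member per colour turns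
any colouring into one confined to a tuple in `𝒮 ^ r`. So both maxima are taken over the same set
of weights.
-/

theorem exists_maximal_pairwise_superset {α : Type*} {R : α → α → Prop} {s : Set α}
    (hs : s.Pairwise R) : ∃ t, s ⊆ t ∧ Maximal (fun u : Set α => u.Pairwise R) t :=
  zorn_subset_nonempty {u : Set α | u.Pairwise R}
    (fun c hc hchain _ =>
      ⟨⋃₀ c, hchain.pairwise_sUnion.2 hc, fun _ => Set.subset_sUnion_of_mem⟩) s hs

section Coloring

variable {V ι : Type*} {G : SimpleGraph V}

theorem exists_mem_superset_of_isIndepSet {𝒮 : Set (Set V)}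
    (h𝒮 : ∀ I, Maximal G.IsIndepSet I → ∃ S ∈ 𝒮, I ⊆ S) {I : Set V} (hI : G.IsIndepSet I) :
    ∃ S ∈ 𝒮, I ⊆ S := by
  obtain ⟨J, hIJ, hJ⟩ := exists_maximal_pairwise_superset hI
  obtain ⟨S, hS, hJS⟩ := h𝒮 J hJ
  exact ⟨S, hS, hIJ.trans hJS⟩

theorem isIndepSet_image_val_colorClass {s : Set V} (C : (G.induce s).Coloring ι) (i : ι) :
    G.IsIndepSet (Subtype.val '' C.colorClass i) := by
  rintro _ ⟨u, hu, rfl⟩ _ ⟨v, hv, rfl⟩ _ huv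
  exact C.not_adj_of_mem_colorClass hu hv huv

theorem exists_family_mem_of_coloring_induce {𝒮 : Set (Set V)}
    (h𝒮 : ∀ I, Maximal G.IsIndepSet I → ∃ S ∈ 𝒮, I ⊆ S) {s : Set V}
    (C : (G.induce s).Coloring ι) :
    ∃ S : ι → Set V, (∀ i, S i ∈ 𝒮) ∧ ∀ v : s, ↑v ∈ S (C v) := by
  choose S hS hsub using fun i =>
    exists_mem_superset_of_isIndepSet h𝒮 (isIndepSet_image_val_colorClass C i)
  exact ⟨S, hS, fun v => hsub (C v) (Set.mem_image_of_mem _ (C.mem_colorClass v))⟩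

end Coloring

theorem stmt14_general {V M : Type*} [AddCommMonoid M] {r : ℕ} (G : SimpleGraph V) (w : V → M)
    (L : V → Set (Fin r)) {𝒮 : Set (Set V)}
    (h𝒮 : ∀ I, Maximal G.IsIndepSet I → ∃ S ∈ 𝒮, I ⊆ S) :
    {m : M | ∃ F : Finset V,
        (∃ φ : {x : V // x ∈ F} → Fin r, RespectsL G r L F φ) ∧ ∑ v ∈ F, w v = m} =
      {m : M | ∃ S : Fin r → Set V, (∀ i, S i ∈ 𝒮) ∧
        ∃ F : Finset V, ↑F ⊆ ⋃ i, S i ∧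
          (∃ φ : {x : V // x ∈ F} → Fin r, RespectsL G r L F φ ∧
            ∀ (v : {x : V // x ∈ F}) (i : Fin r), φ v = i → (↑v : V) ∈ S i) ∧
          ∑ v ∈ F, w v = m} := by
  ext m
  constructor
  · rintro ⟨F, ⟨φ, hφ⟩, hm⟩
    let C : (G.induce (F : Set V)).Coloring (Fin r) := Coloring.mk φ (hφ.1 _ _)
    obtain ⟨S, hS, hmem⟩ := exists_family_mem_of_coloring_induce h𝒮 C
    have hF : (F : Set V) ⊆ ⋃ i, S i := fun v hv => Set.mem_iUnion_of_mem _ (hmem ⟨v, hv⟩)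
    exact ⟨S, hS, F, hF, ⟨φ, hφ, fun v _ hi => hi ▸ hmem v⟩, hm⟩
  · rintro ⟨-, -, F, -, ⟨φ, hφ, -⟩, hm⟩
    exact ⟨F, ⟨φ, hφ⟩, hm⟩

/-- Let `r ≥ 1`, `w` a nonnegative weight function, `L` an `r`-list assignment of `G`,
and `𝒮` a nonempty family of vertex subsets such that every maximal independent set of
`G` is contained in some member of `𝒮`. Then the maximum of `∑_{v ∈ F} w v` over all
`F ⊆ V(G)` such that `G[F]` admits a proper colouring respecting `L` equals the maximum,
over `r`-tuples `(S 1, …, S r) ∈ 𝒮^r`, of the maximum of `∑_{v ∈ F} w v` over all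
`F ⊆ S 1 ∪ … ∪ S r` for which `G[F]` has a proper colouring `φ` respecting `L` with
`φ⁻¹(i) ⊆ S i` for every `i`. -/
theorem stmt14 {V : Type*} [Fintype V] (r : ℕ) (hr : 1 ≤ r) (G : SimpleGraph V)
    (w : V → ℚ) (hw : ∀ v, 0 ≤ w v) (L : V → Set (Fin r))
    (𝒮 : Set (Set V)) (h𝒮ne : 𝒮.Nonempty)
    (h𝒮 : ∀ I : Set V, I.Pairwise (fun u v => ¬ G.Adj u v) →
      (∀ J : Set V, J.Pairwise (fun u v => ¬ G.Adj u v) → I ⊆ J → J = I) →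
      ∃ S ∈ 𝒮, I ⊆ S)
    (M : ℚ) :
    IsGreatest {m : ℚ | ∃ F : Finset V,
        (∃ φ : {x : V // x ∈ F} → Fin r, RespectsL G r L F φ) ∧ ∑ v ∈ F, w v = m} M ↔
      IsGreatest {m : ℚ | ∃ S : Fin r → Set V, (∀ i, S i ∈ 𝒮) ∧
        ∃ F : Finset V, ↑F ⊆ ⋃ i, S i ∧
          (∃ φ : {x : V // x ∈ F} → Fin r, RespectsL G r L F φ ∧
            ∀ (v : {x : V // x ∈ F}) (i : Fin r), φ v = i → (↑v : V) ∈ S i) ∧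
          ∑ v ∈ F, w v = m} M := by
  rw [stmt14_general G w L fun I hI =>
    h𝒮 I hI.prop fun J hJ hIJ => (hI.eq_of_subset hJ hIJ).symm]
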